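/- Suppose Assumption A1 holds and that A(I_n − A)^{−1}𝟙_n is a left eigenvector of C associated with eigenvalue 1, i.e., C^⊤ A(I_n − A)^{−1}𝟙_n = A(I_n − A)^{−1}𝟙_n. Let H = Γ_n(0, ν) where ν_i ≥ 1/n for i ∈ V_f and ν_i = 1/2 for i ∈ V_p. Then every trajectory of the perception dynamics with reflected appraisals (system (11)) starting in H converges exponentially (there exist c > 0 and λ ∈ (0,1) with ‖p(s) − 𝟙_n/n‖ ≤ c λ^s for all s) to the democratic allocation 𝟙_n/n. -/

import Mathlib

/-!
Coordinatewise, with `w j = a j / (1 - a j)`, the map of the system reads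
`p i ↦ a i * p i ^ 2 + (1 - a i) * (∑ j, C j i * w j * (p j * (1 - p j)) + 1 / n)`
(`percMap_apply`). The eigenvector hypothesis says `(1 - a i) * ∑ j, C j i * w j = a i`, and both
`x ^ 2` and `x * (1 - x)` are increasing on `[0, 1/2]` and add up to `x`. Hence, if all partially
stubborn individuals have value at most `M ≤ 1/2`, the new values are at most
`a i * M + (1 - a i) / n`, and symmetrically for lower bounds `m ≥ 0`. Fully stubborn individuals
have `w j = 0`, so they have no influence, and their own value is `1 / n` after one step.
With `α = max a < 1`, the partially stubborn values therefore stay in an interval around `1 / n`,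
contained in `[0, 1/2]`, whose endpoints approach `1 / n` at rate `α ^ s`.
-/

open Matrix Finset

/-- `W(x) = diag(x) + (I - diag(x)) C`. -/
noncomputable def Wmat (n : ℕ) (C : Matrix (Fin n) (Fin n) ℝ) (x : Fin n → ℝ) :
    Matrix (Fin n) (Fin n) ℝ :=
  Matrix.diagonal x + (1 - Matrix.diagonal x) * C

/-- The map of system (11): `p ↦ (I - A) W(p)ᵀ A (I - A)⁻¹ p + (I - A) 𝟙 / n`. -/
noncomputable def percMap (n : ℕ) (C : Matrix (Fin n) (Fin n) ℝ) (a : Fin n → ℝ)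
    (p : Fin n → ℝ) : Fin n → ℝ :=
  ((1 - Matrix.diagonal a) * (Wmat n C p)ᵀ * Matrix.diagonal a *
      (1 - Matrix.diagonal a)⁻¹) *ᵥ p
    + (1 / (n : ℝ)) • ((1 - Matrix.diagonal a) *ᵥ (fun _ => (1 : ℝ)))

/-- The `n`-simplex `Δ_n`. -/
def simplex (n : ℕ) : Set (Fin n → ℝ) := {x | (∀ i, 0 ≤ x i) ∧ ∑ i, x i = 1}

/-- The box `Γ_n(y, z) = {x : y ≤ x ≤ z}`. -/
def box (n : ℕ) (y z : Fin n → ℝ) : Set (Fin n → ℝ) := {x | ∀ i, y i ≤ x i ∧ x i ≤ z i}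

lemma percMap_apply (n : ℕ) (C : Matrix (Fin n) (Fin n) ℝ) (a : Fin n → ℝ)
    (ha1 : ∀ i, a i < 1) (p : Fin n → ℝ) (i : Fin n) :
    percMap n C a p i = a i * p i ^ 2
      + (1 - a i) * (∑ j, C j i * (a j / (1 - a j)) * (p j * (1 - p j)) + 1 / (n : ℝ)) := by
  have hne : ∀ j, 1 - a j ≠ 0 := fun j => (sub_pos.mpr (ha1 j)).ne'
  have hD : ∀ x : Fin n → ℝ,
      (1 : Matrix (Fin n) (Fin n) ℝ) - Matrix.diagonal x = Matrix.diagonal (fun j => 1 - x j) := by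
    intro x
    rw [← Matrix.diagonal_one, Matrix.diagonal_sub]
  have hinv : (Matrix.diagonal (fun j => 1 - a j))⁻¹
      = Matrix.diagonal (fun j => (1 - a j)⁻¹) := by
    apply Matrix.inv_eq_right_inv
    rw [Matrix.diagonal_mul_diagonal, ← Matrix.diagonal_one]
    congr 1
    funext j
    exact mul_inv_cancel₀ (hne j)
  have hsum : ∑ j, ((1 - a i) * Wmat n C p j i * a j * (1 - a j)⁻¹) * p j
      = a i * p i ^ 2 + (1 - a i) * ∑ j, C j i * (a j / (1 - a j)) * (p j * (1 - p j)) := by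
    have h1 : ∀ j, ((1 - a i) * Wmat n C p j i * a j * (1 - a j)⁻¹) * p j
        = (if j = i then a i * p i ^ 2 else 0)
          + (1 - a i) * (C j i * (a j / (1 - a j)) * (p j * (1 - p j))) := by
      intro j
      simp only [Wmat, hD, Matrix.add_apply, Matrix.diagonal_mul, Matrix.diagonal_apply]
      split_ifs with h
      · subst h
        have := hne j
        field_simp
      · ring
    rw [Finset.sum_congr rfl (fun j _ => h1 j), Finset.sum_add_distrib, ← Finset.mul_sum]
    simp
  have hl : percMap n C a p i
      = ∑ j, ((1 - a i) * Wmat n C p j i * a j * (1 - a j)⁻¹) * p j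
        + 1 / (n : ℝ) * (1 - a i) := by
    simp only [percMap, hD a, hinv, Pi.add_apply, Pi.smul_apply, smul_eq_mul,
      Matrix.mulVec_diagonal, mul_one]
    congr 1
    simp only [Matrix.mulVec, dotProduct, Matrix.mul_diagonal, Matrix.diagonal_mul,
      Matrix.transpose_apply]
  rw [hl, hsum]
  ring

/-- One step of the map is monotone on `[0, 1/2]`: an interval `[m, M] ⊆ [0, 1/2]` containing the
values of all partially stubborn individuals is shrunk towards `1 / n` by the factor `a i`. -/
lemma percMap_bounds (n : ℕ) (C : Matrix (Fin n) (Fin n) ℝ) (hC0 : ∀ i j, 0 ≤ C i j)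
    (a : Fin n → ℝ) (ha0 : ∀ i, 0 ≤ a i) (ha1 : ∀ i, a i < 1)
    (heig : ∀ i, ∑ j, C j i * (a j / (1 - a j)) = a i / (1 - a i))
    (p : Fin n → ℝ) (m M : ℝ) (hm : 0 ≤ m) (hM : M ≤ 1 / 2)
    (hp : ∀ i, 0 < a i → m ≤ p i ∧ p i ≤ M) (i : Fin n) :
    a i * m + (1 - a i) / n ≤ percMap n C a p i ∧
      percMap n C a p i ≤ a i * M + (1 - a i) / n := by
  have hi : 0 < 1 - a i := sub_pos.mpr (ha1 i)
  have hw : ∀ j, 0 ≤ C j i * (a j / (1 - a j)) := fun j =>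
    mul_nonneg (hC0 j i) (div_nonneg (ha0 j) (sub_pos.mpr (ha1 j)).le)
  -- A constant factors out of the weighted sum by the eigenvector hypothesis.
  have hconst : ∀ t : ℝ, (1 - a i) * ∑ j, C j i * (a j / (1 - a j)) * t = a i * t := by
    intro t
    rw [← Finset.sum_mul, heig i]
    field_simp
  have hlow : a i * (m * (1 - m))
      ≤ (1 - a i) * ∑ j, C j i * (a j / (1 - a j)) * (p j * (1 - p j)) := by
    rw [← hconst]
    refine mul_le_mul_of_nonneg_left (Finset.sum_le_sum fun j _ => ?_) hi.le
    rcases (ha0 j).eq_or_lt with h | h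
    · simp [← h]
    · obtain ⟨h1, h2⟩ := hp j h
      exact mul_le_mul_of_nonneg_left (by nlinarith) (hw j)
  have hupp : (1 - a i) * ∑ j, C j i * (a j / (1 - a j)) * (p j * (1 - p j))
      ≤ a i * (M * (1 - M)) := by
    rw [← hconst]
    refine mul_le_mul_of_nonneg_left (Finset.sum_le_sum fun j _ => ?_) hi.le
    rcases (ha0 j).eq_or_lt with h | h
    · simp [← h]
    · obtain ⟨h1, h2⟩ := hp j h
      exact mul_le_mul_of_nonneg_left (by nlinarith) (hw j)
  have hsq : a i * m ^ 2 ≤ a i * p i ^ 2 ∧ a i * p i ^ 2 ≤ a i * M ^ 2 := by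
    rcases (ha0 i).eq_or_lt with h | h
    · simp [← h]
    · obtain ⟨h1, h2⟩ := hp i h
      exact ⟨mul_le_mul_of_nonneg_left (by nlinarith) h.le,
        mul_le_mul_of_nonneg_left (by nlinarith) h.le⟩
  rw [percMap_apply n C a ha1, mul_add]
  have e : (1 - a i) * (1 / (n : ℝ)) = (1 - a i) / n := by ring
  rw [e]
  constructor <;> nlinarith [hsq.1, hsq.2]

/-- Corollary: convergence to democracy: if `A(I - A)⁻¹ 𝟙` is a left
eigenvector of `C` for eigenvalue 1, all trajectories of system (11) starting in
`H = Γ_n(0, ν)` converge exponentially to `𝟙/n`. -/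
theorem convergence_to_democracy
    (n : ℕ) (hn : 2 ≤ n)
    (C : Matrix (Fin n) (Fin n) ℝ)
    (hC0 : ∀ i j, 0 ≤ C i j) (hCrow : ∀ i, ∑ j, C i j = 1) (hCdiag : ∀ i, C i i = 0)
    (a : Fin n → ℝ) (ha0 : ∀ i, 0 ≤ a i) (ha1 : ∀ i, a i < 1) (hane : a ≠ 0)
    (heig : ∀ i, ∑ j, C j i * (a j / (1 - a j)) = a i / (1 - a i))
    (ν : Fin n → ℝ)
    (hνf : ∀ i, a i = 0 → 1 / (n : ℝ) ≤ ν i)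
    (hνp : ∀ i, 0 < a i → ν i = 1 / 2)
    (p : ℕ → Fin n → ℝ) (hp : ∀ s, p (s + 1) = percMap n C a (p s))
    (hp0 : p 0 ∈ box n 0 ν) :
    ∃ c > 0, ∃ lam ∈ Set.Ioo (0 : ℝ) 1, ∀ s : ℕ,
      ‖p s - fun _ => 1 / (n : ℝ)‖ ≤ c * lam ^ s := by
  have hn2 : (2 : ℝ) ≤ n := by exact_mod_cast hn
  have hn0 : (0 : ℝ) < 1 / n := by positivity
  have hnh : 1 / (n : ℝ) ≤ 1 / 2 := one_div_le_one_div_of_le (by norm_num) hn2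
  -- The rate is the largest entry of `a`.
  obtain ⟨k, -, hk⟩ := Finset.exists_max_image Finset.univ a ⟨⟨0, by omega⟩, Finset.mem_univ _⟩
  have hk0 : 0 < a k := by
    obtain ⟨i, hi⟩ := Function.ne_iff.mp hane
    exact ((ha0 i).lt_of_ne' hi).trans_le (hk i (Finset.mem_univ i))
  have key : ∀ s : ℕ, ∀ i, 0 < a i →
      1 / (n : ℝ) - a k ^ s * (1 / n) ≤ p s i ∧
        p s i ≤ 1 / (n : ℝ) + a k ^ s * (1 / 2 - 1 / n) := by
    intro s
    induction s with
    | zero =>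
      intro i hi
      have h := hp0 i
      rw [hνp i hi] at h
      have h1 : 0 ≤ p 0 i := h.1
      constructor <;> linarith [h.2]
    | succ s ih =>
      intro i hi
      have hs1 : a k ^ s ≤ 1 := pow_le_one₀ hk0.le (ha1 k).le
      have hs0 : 0 < a k ^ s := pow_pos hk0 s
      have hb := percMap_bounds n C hC0 a ha0 ha1 heig (p s) _ _
        (by nlinarith) (by nlinarith) ih i
      rw [hp s, pow_succ]
      have hki := hk i (Finset.mem_univ i)
      have e : (1 - a i) / (n : ℝ) = (1 - a i) * (1 / n) := by ring
      rw [e] at hb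
      have h1 : 0 ≤ (a k - a i) * (a k ^ s * (1 / (n : ℝ))) :=
        mul_nonneg (sub_nonneg.mpr hki) (mul_nonneg hs0.le hn0.le)
      have h2 : 0 ≤ (a k - a i) * (a k ^ s * (1 / 2 - 1 / (n : ℝ))) :=
        mul_nonneg (sub_nonneg.mpr hki) (mul_nonneg hs0.le (sub_nonneg.mpr hnh))
      constructor <;> linarith [hb.1, hb.2]
  -- The second summand covers fully stubborn individuals at time `0`, where `ν` is arbitrary.
  refine ⟨1 + ‖p 0 - fun _ => 1 / (n : ℝ)‖, by positivity, a k, ⟨hk0, ha1 k⟩, fun s => ?_⟩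
  rcases s with _ | s
  · rw [pow_zero, mul_one]
    linarith
  have hs0 : 0 < a k ^ (s + 1) := pow_pos hk0 _
  refine le_trans ?_ (le_mul_of_one_le_left hs0.le (by
    linarith [norm_nonneg (p 0 - (fun _ => 1 / (n : ℝ)))]))
  refine (pi_norm_le_iff_of_nonneg hs0.le).mpr fun i => ?_
  rw [Real.norm_eq_abs, Pi.sub_apply, abs_le]
  rcases (ha0 i).eq_or_lt with h | h
  · have hb := percMap_bounds n C hC0 a ha0 ha1 heig (p s) 0 (1 / 2) le_rfl le_rfl
      (fun j hj => by
        have hs1 : a k ^ s ≤ 1 := pow_le_one₀ hk0.le (ha1 k).le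
        constructor <;> nlinarith [(key s j hj).1, (key s j hj).2]) i
    rw [← hp s, ← h] at hb
    simp only [zero_mul, zero_add, sub_zero] at hb
    constructor <;> linarith [hb.1, hb.2]
  · obtain ⟨h1, h2⟩ := key (s + 1) i h
    constructor <;> nlinarith
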